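/- arXiv:1906.06461 — 2 statements merged into one kernel-verified Lean document; each statement's English description precedes it below -/
import Mathlib

section
/- For every feasible schedule of 𝒥 on m identical machines with completion times C, the midpoints M_j = C_j − p_j/2 satisfy, for every subset A ⊆ 𝒥, the inequality ∑_{j ∈ A} p_j · M_j ≥ (1/(2m))·(∑_{j ∈ A} p_j)². -/
/-! On one machine, list the jobs by increasing midpoint. When the last job `j` starts, all the
other jobs have been completed, so their total length `P` is at most `S j`. Hence adding `j`
increases `(∑ p)²` by `2 p_j P + p_j² ≤ 2 p_j (S_j + p_j / 2) = 2 p_j M_j`, and induction gives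
`(∑ p)² ≤ 2 ∑ p M` (`single_machine`). For `m` machines this is applied to the jobs of `A` on each
machine, and Cauchy–Schwarz, `(∑ₖ Pₖ)² ≤ m ∑ₖ Pₖ²`, combines the machine loads `Pₖ`. -/

/-- A feasible schedule of the jobs on `m` identical machines. -/
def FeasSched {Jb : Type*} (m : ℕ) (p : Jb → ℝ) (a : Jb → Fin m) (S : Jb → ℝ) : Prop :=
  (∀ j, 0 ≤ S j) ∧
  ∀ i j, i ≠ j → a i = a j → S i + p i ≤ S j ∨ S j + p j ≤ S i

/-- The case of one machine. The first conjunct, that jobs completed by time `T` have total length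
at most `T`, is what the induction for the second one needs. -/
theorem single_machine {Jb : Type*} (p S : Jb → ℝ) (hp : ∀ j, 0 ≤ p j) (hS : ∀ j, 0 ≤ S j)
    (B : Finset Jb)
    (hB : ∀ i ∈ B, ∀ j ∈ B, i ≠ j → S i + p i ≤ S j ∨ S j + p j ≤ S i) :
    (∀ T, 0 ≤ T → (∀ j ∈ B, S j + p j ≤ T) → ∑ j ∈ B, p j ≤ T) ∧
      (∑ j ∈ B, p j) ^ 2 ≤ 2 * ∑ j ∈ B, p j * (S j + p j / 2) := by
  classical
  induction B using Finset.induction_on_max_value (fun j => S j + p j / 2) with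
  | empty => simp
  | insert j B hj hmax ih =>
    obtain ⟨ih1, ih2⟩ := ih fun i hi k hk =>
      hB i (Finset.mem_insert_of_mem hi) k (Finset.mem_insert_of_mem hk)
    have hP : ∑ i ∈ B, p i ≤ S j := by
      refine ih1 _ (hS j) fun i hi => ?_
      have hij : i ≠ j := fun h => hj (h ▸ hi)
      rcases hB i (Finset.mem_insert_of_mem hi) j (Finset.mem_insert_self _ _) hij with h | h
      · exact h
      · -- If `i` follows `j`, maximality of the midpoint of `j` forces both lengths to be zero.
        have h1 := hmax i hi
        have h2 := hp i
        have h3 := hp j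
        linarith
    rw [Finset.sum_insert hj, Finset.sum_insert hj]
    refine ⟨fun T _ h => ?_, ?_⟩
    · have := h j (Finset.mem_insert_self _ _)
      linarith
    · nlinarith [mul_le_mul_of_nonneg_left hP (hp j)]

/-- For every feasible schedule on `m` identical machines with
completion times `C j = S j + p j`, the midpoints `M j = C j - p j / 2`
satisfy `∑_{j ∈ A} p_j M_j ≥ (1/(2m)) (∑_{j ∈ A} p_j)²` for every subset `A`. -/
theorem midpoint_inequalities {Jb : Type*} [Fintype Jb] (m : ℕ) (hm : 1 ≤ m)
    (p : Jb → ℝ) (hp : ∀ j, 0 ≤ p j)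
    (a : Jb → Fin m) (S : Jb → ℝ) (hfeas : FeasSched m p a S)
    (C M : Jb → ℝ) (hC : ∀ j, C j = S j + p j) (hM : ∀ j, M j = C j - p j / 2)
    (A : Finset Jb) :
    (1 / (2 * (m : ℝ))) * (∑ j ∈ A, p j) ^ 2 ≤ ∑ j ∈ A, p j * M j := by
  obtain ⟨hS, hno⟩ := hfeas
  have hmach : ∀ k : Fin m, (∑ j ∈ A with a j = k, p j) ^ 2 ≤
      2 * ∑ j ∈ A with a j = k, p j * M j := by
    intro k
    have h := (single_machine p S hp hS (A.filter fun j => a j = k) fun i hi j hj hij =>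
      hno i j hij ((Finset.mem_filter.1 hi).2.trans (Finset.mem_filter.1 hj).2.symm)).2
    have hM' : ∀ j, M j = S j + p j / 2 := fun j => by rw [hM, hC]; ring
    simpa only [hM'] using h
  have hcs := sq_sum_le_card_mul_sum_sq (s := (Finset.univ : Finset (Fin m)))
    (f := fun k => ∑ j ∈ A with a j = k, p j)
  rw [Finset.sum_fiberwise, Finset.card_univ, Fintype.card_fin] at hcs
  have hsum := Finset.sum_le_sum fun k (_ : k ∈ (Finset.univ : Finset (Fin m))) => hmach k
  rw [← Finset.mul_sum, Finset.sum_fiberwise] at hsum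
  have hm0 : (0 : ℝ) < m := by exact_mod_cast hm
  rw [one_div, inv_mul_le_iff₀ (by positivity)]
  calc (∑ j ∈ A, p j) ^ 2 ≤ _ := hcs
    _ ≤ (m : ℝ) * (2 * ∑ j ∈ A, p j * M j) := mul_le_mul_of_nonneg_left hsum hm0.le
    _ = _ := by ring
end

section
/- For every feasible schedule of 𝒥 on m identical machines with completion times C, there exists a linear extension σ of ⪯ such that, with p_J = ∑_{j ∈ J} p_j and C_J(σ) = ∑_{J' : J' ⪯_σ J} p_{J'}, one has C_J(σ) ≤ m·E_J(C) for every island J. Consequently, there exists a linear order π of 𝒥 with ∑_J ω_J·E_J(C^π) ≤ m·∑_J ω_J·E_J(C); in particular, the minimum single-crew cost over all linear orders of 𝒥 is at most m times the cost of every feasible m-machine schedule (H^{m,*} ≥ (1/m)·H^{1,*}). -/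
/-!
Jobs that are all completed by time `T` occupy disjoint subintervals of `[0, T]` on each machine, so
their total processing time is at most `m * T` (`FeasSched.sum_le`). Sort the islands by energization
time, breaking ties by a linear extension of `≤`. Since the energization time is monotone in the
island, this is a linear extension of the precedence order. Every job of an island placed no later
than `K` is completed by time `E_K`, so the volume bound gives `C_K(σ) ≤ m * E_K`
(`FeasSched.sum_le_energ`). Sorting the jobs by the energization time of their island gives, by the
same volume bound, a single-crew order in which every job of an island `K` is completed by
`m * E_K`; the cost bound follows by summation.
-/

/-- Energization time of island `K` for completion times `C`. -/
noncomputable def energ {Jb I : Type*} [PartialOrder I]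
    (isl : Jb → I) (C : Jb → ℝ) (K : I) : ℝ :=
  ⨆ j : {j : Jb // isl j ≤ K}, C j.1

open scoped Classical in
/-- Single-crew completion time of item `j` under the linear (list) order `r`. -/
noncomputable def Cpi {Jb : Type*} [Fintype Jb] (p : Jb → ℝ)
    (r : Jb → Jb → Prop) (j : Jb) : ℝ :=
  ∑ i ∈ Finset.univ.filter (fun i => r i j), p i

open scoped Classical in
/-- Composite processing time of island `K`: the total processing time of its jobs. -/
noncomputable def pComp {Jb I : Type*} [Fintype Jb] (isl : Jb → I) (p : Jb → ℝ)
    (K : I) : ℝ :=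
  ∑ j ∈ Finset.univ.filter (fun j => isl j = K), p j

/-- Pairwise non-overlapping jobs run within `[0, T]` on one machine have total length at most `T`. -/
lemma sum_le_of_nonoverlap {Jb : Type*} (p S : Jb → ℝ) (hp : ∀ j, 0 ≤ p j) (hS : ∀ j, 0 ≤ S j)
    (A : Finset Jb) :
    ∀ T : ℝ, 0 ≤ T → (∀ j ∈ A, S j + p j ≤ T) →
      (∀ i ∈ A, ∀ j ∈ A, i ≠ j → S i + p i ≤ S j ∨ S j + p j ≤ S i) →
      ∑ j ∈ A, p j ≤ T := by
  classical
  -- Remove a job with the latest start; the others finish before it starts, unless its length is 0.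
  induction A using Finset.induction_on_max_value S with
  | empty => intro T hT _ _; simpa using hT
  | insert j A hj hmax ih =>
    intro T hT hC hno
    rw [Finset.sum_insert hj]
    have hno' : ∀ i ∈ A, ∀ k ∈ A, i ≠ k → S i + p i ≤ S k ∨ S k + p k ≤ S i :=
      fun i hi k hk => hno i (Finset.mem_insert_of_mem hi) k (Finset.mem_insert_of_mem hk)
    rcases (hp j).eq_or_lt with h0 | hpos
    · have := ih T hT (fun i hi => hC i (Finset.mem_insert_of_mem hi)) hno'
      linarith
    · have h1 := ih (S j) (hS j) (fun i hi => by
        rcases hno i (Finset.mem_insert_of_mem hi) j (Finset.mem_insert_self j A)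
          (fun h => hj (h ▸ hi)) with h | h
        · exact h
        · have := hmax i hi
          linarith) hno'
      have := hC j (Finset.mem_insert_self j A)
      linarith

/-- Volume bound: jobs completed by time `T` on `m` machines have total length at most `m * T`. -/
lemma FeasSched.sum_le {Jb : Type*} {m : ℕ} {p : Jb → ℝ} {a : Jb → Fin m} {S : Jb → ℝ}
    (h : FeasSched m p a S) (hp : ∀ j, 0 ≤ p j) (A : Finset Jb) (T : ℝ) (hT : 0 ≤ T)
    (hA : ∀ j ∈ A, S j + p j ≤ T) : ∑ j ∈ A, p j ≤ m * T := by
  classical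
  rw [← Finset.sum_fiberwise A a p]
  calc ∑ k : Fin m, ∑ j ∈ A with a j = k, p j ≤ ∑ _k : Fin m, T := by
        refine Finset.sum_le_sum fun k _ => sum_le_of_nonoverlap p S hp h.1 _ T hT ?_ ?_
        · intro j hj
          exact hA j (Finset.mem_filter.1 hj).1
        · intro i hi j hj hij
          exact h.2 i j hij ((Finset.mem_filter.1 hi).2.trans (Finset.mem_filter.1 hj).2.symm)
    _ = m * T := by simp

lemma le_energ {Jb I : Type*} [Finite Jb] [PartialOrder I] (isl : Jb → I) (C : Jb → ℝ)
    {j : Jb} {K : I} (h : isl j ≤ K) : C j ≤ energ isl C K :=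
  le_ciSup (f := fun j : {j : Jb // isl j ≤ K} => C j.1) (Set.finite_range _).bddAbove ⟨j, h⟩

lemma energ_le {Jb I : Type*} [PartialOrder I] {isl : Jb → I}
    (hsurj : Function.Surjective isl) {C : Jb → ℝ} {K : I} {T : ℝ}
    (h : ∀ j, isl j ≤ K → C j ≤ T) : energ isl C K ≤ T := by
  obtain ⟨j, hj⟩ := hsurj K
  have : Nonempty {j : Jb // isl j ≤ K} := ⟨⟨j, hj.le⟩⟩
  exact ciSup_le fun i => h i.1 i.2

lemma energ_mono {Jb I : Type*} [Finite Jb] [PartialOrder I] {isl : Jb → I}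
    (hsurj : Function.Surjective isl) (C : Jb → ℝ) : Monotone (energ isl C) :=
  fun _ _ h => energ_le hsurj fun _ hj => le_energ isl C (hj.trans h)

/-- Jobs whose islands are energized no later than `K` have total length at most `m * E_K`. -/
lemma FeasSched.sum_le_energ {Jb I : Type*} [Finite Jb] [PartialOrder I] {isl : Jb → I}
    (hsurj : Function.Surjective isl) {m : ℕ} {p : Jb → ℝ} {a : Jb → Fin m} {S : Jb → ℝ}
    (h : FeasSched m p a S) (hp : ∀ j, 0 ≤ p j) (A : Finset Jb) (K : I)
    (hA : ∀ j ∈ A, energ isl (fun j => S j + p j) (isl j) ≤ energ isl (fun j => S j + p j) K) :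
    ∑ j ∈ A, p j ≤ m * energ isl (fun j => S j + p j) K := by
  refine h.sum_le hp A _ ?_ fun j hj =>
    (le_energ isl (fun j => S j + p j) le_rfl).trans (hA j hj)
  obtain ⟨j, hj⟩ := hsurj K
  exact (add_nonneg (h.1 j) (hp j)).trans (le_energ isl (fun j => S j + p j) hj.le)

lemma isLinearOrder_pullback {α β : Type*} [LinearOrder β] {f : α → β}
    (hf : Function.Injective f) : IsLinearOrder α (fun x y => f x ≤ f y) where
  refl _ := le_rfl
  trans _ _ _ h₁ h₂ := le_trans h₁ h₂
  antisymm _ _ h₁ h₂ := hf (le_antisymm h₁ h₂)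
  total _ _ := le_total _ _

open scoped Classical in
/-- The completion time of an island in an island order, as a sum over jobs. -/
lemma Cpi_pComp {Jb I : Type*} [Fintype Jb] [Fintype I] (isl : Jb → I) (p : Jb → ℝ)
    (s : I → I → Prop) (K : I) :
    Cpi (pComp isl p) s K = ∑ j ∈ Finset.univ.filter (fun j => s (isl j) K), p j := by
  unfold Cpi pComp
  rw [← Finset.sum_fiberwise_of_maps_to (s := Finset.univ.filter (fun j => s (isl j) K))
    (t := Finset.univ.filter (fun L => s L K)) (g := isl) (by simp)]
  refine Finset.sum_congr rfl fun L hL => Finset.sum_congr ?_ fun _ _ => rfl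
  have hL' := (Finset.mem_filter.1 hL).2
  ext j
  simp only [Finset.mem_filter, Finset.mem_univ, true_and]
  exact ⟨fun h => ⟨h ▸ hL', h⟩, fun h => h.2⟩

/-- For every feasible `m`-machine schedule with completion times
`C j = S j + p j`, there is a linear extension `σ` of the island order with
`C_J(σ) ≤ m·E_J(C)` for every island `J`; consequently there is a linear order
of the jobs whose single-crew cost is at most `m` times the cost of the given
schedule (`H^{m,*} ≥ (1/m)·H^{1,*}`). -/
theorem single_crew_lower_bound {Jb I : Type*} [Fintype Jb] [Fintype I]
    [Nonempty I] [PartialOrder I]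
    (m : ℕ) (hm : 1 ≤ m)
    (isl : Jb → I) (hsurj : Function.Surjective isl)
    (p : Jb → ℝ) (hp : ∀ j, 0 ≤ p j)
    (ω : I → ℝ) (hω : ∀ K, 0 ≤ ω K)
    (a : Jb → Fin m) (S : Jb → ℝ) (hfeas : FeasSched m p a S) :
    (∃ s : I → I → Prop, IsLinearOrder I s ∧ (∀ K K' : I, K' ≤ K → s K' K) ∧
      ∀ K : I, Cpi (pComp isl p) s K ≤ (m : ℝ) * energ isl (fun j => S j + p j) K) ∧
    (∃ r : Jb → Jb → Prop, IsLinearOrder Jb r ∧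
      ∑ K, ω K * energ isl (Cpi p r) K
        ≤ (m : ℝ) * ∑ K, ω K * energ isl (fun j => S j + p j) K) := by
  classical
  set E : I → ℝ := energ isl (fun j => S j + p j) with hE
  have hmono : Monotone E := energ_mono hsurj _
  constructor
  · let f : I → ℝ ×ₗ LinearExtension I := fun K => toLex (E K, toLinearExtension K)
    have hf : Function.Injective f := fun K L h => congrArg (fun x => (ofLex x).2) h
    have hfE : ∀ {K L}, f K ≤ f L → E K ≤ E L := fun h => (Prod.Lex.monotone_fst_ofLex h)
    refine ⟨fun K L => f K ≤ f L, isLinearOrder_pullback hf, fun K L h => ?_, fun K => ?_⟩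
    · exact Prod.Lex.toLex_mono ⟨hmono h, toLinearExtension.monotone h⟩
    · rw [Cpi_pComp]
      exact hfeas.sum_le_energ hsurj hp _ K fun j hj => by
        simp only [Finset.mem_filter, Finset.mem_univ, true_and] at hj
        exact hfE hj
  · -- Sort the jobs by the energization time of their island, ties broken by an enumeration.
    let f : Jb → ℝ ×ₗ Fin (Fintype.card Jb) :=
      fun j => toLex (E (isl j), Fintype.equivFin Jb j)
    have hf : Function.Injective f := fun i j h =>
      (Fintype.equivFin Jb).injective (congrArg (fun x => (ofLex x).2) h)
    have hfE : ∀ {i j}, f i ≤ f j → E (isl i) ≤ E (isl j) :=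
      fun h => (Prod.Lex.monotone_fst_ofLex h)
    refine ⟨fun i j => f i ≤ f j, isLinearOrder_pullback hf, ?_⟩
    rw [Finset.mul_sum]
    refine Finset.sum_le_sum fun K _ => ?_
    rw [mul_left_comm]
    refine mul_le_mul_of_nonneg_left (energ_le hsurj fun j hj => ?_) (hω K)
    exact hfeas.sum_le_energ hsurj hp _ K fun i hi => by
      simp only [Finset.mem_filter, Finset.mem_univ, true_and] at hi
      exact (hfE hi).trans (hmono hj)
end
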